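/- For all 1 ≤ k < j ≤ n and every x ∈ U ∩ S^n, the Fréchet derivative of e_j at x in direction e_k(x) vanishes: D_{e_k(x)} e_j(x) = 0. -/

import Mathlib

open scoped InnerProductSpace BigOperators

noncomputable section

/-- `s_j(x) = ∑_{r=j}^n x_r²`. -/
def sfun (n j : ℕ) (x : EuclideanSpace ℝ (Fin (n + 1))) : ℝ :=
  ∑ r : Fin (n + 1), if j ≤ (r : ℕ) then x r ^ 2 else 0

/-- The `j`-th coordinate of `x` (read as a natural-number index, `0` out of range). -/
def coordfun (n : ℕ) (x : EuclideanSpace ℝ (Fin (n + 1))) (j : ℕ) : ℝ :=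
  if h : j < n + 1 then x ⟨j, h⟩ else 0

/-- The vector field `e_j(x) = √(s_j/s_{j-1}) ( −∂_{j−1} + (x_{j−1}/s_j) Σ_{r=j}^n x_r ∂_r )`. -/
def efun (n j : ℕ) (x : EuclideanSpace ℝ (Fin (n + 1))) : EuclideanSpace ℝ (Fin (n + 1)) :=
  WithLp.toLp 2 fun r => Real.sqrt (sfun n j x / sfun n (j - 1) x) *
    (-(if (r : ℕ) = j - 1 then 1 else 0)
      + coordfun n x (j - 1) / sfun n j x * (if j ≤ (r : ℕ) then x r else 0))

/-- `U = {x ∈ ℝ^{n+1} : x_n > 0}`. -/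
def Usph (n : ℕ) : Set (EuclideanSpace ℝ (Fin (n + 1))) := {x | 0 < coordfun n x n}

/-- The unit sphere `S^n ⊂ ℝ^{n+1}`. -/
def sph (n : ℕ) : Set (EuclideanSpace ℝ (Fin (n + 1))) :=
  {x | ∑ r : Fin (n + 1), x r ^ 2 = 1}

/-- `s_j` is homogeneous of degree two in the coordinates of index at least `m`, for `m ≤ j`. -/
lemma sfun_eq_sq_mul {n m j : ℕ} (hmj : m ≤ j) {x y : EuclideanSpace ℝ (Fin (n + 1))} {a : ℝ}
    (h : ∀ r : Fin (n + 1), m ≤ (r : ℕ) → y r = a * x r) :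
    sfun n j y = a ^ 2 * sfun n j x := by
  simp only [sfun, Finset.mul_sum]
  refine Finset.sum_congr rfl fun r _ => ?_
  split_ifs with hr
  · rw [h r (hmj.trans hr), mul_pow]
  · rw [mul_zero]

/-- `e_j` depends only on the coordinates of index at least `j - 1`, and is invariant under
scaling these by a nonzero factor. -/
lemma efun_eq_of_scale {n j : ℕ} {x y : EuclideanSpace ℝ (Fin (n + 1))} {a : ℝ} (ha : a ≠ 0)
    (h : ∀ r : Fin (n + 1), j - 1 ≤ (r : ℕ) → y r = a * x r) :
    efun n j y = efun n j x := by
  have hc : coordfun n y (j - 1) = a * coordfun n x (j - 1) := by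
    unfold coordfun
    split_ifs with hlt
    · exact h ⟨j - 1, hlt⟩ le_rfl
    · rw [mul_zero]
  ext r
  simp only [efun]
  rw [sfun_eq_sq_mul (Nat.sub_le j 1) h, sfun_eq_sq_mul le_rfl h, hc,
    mul_div_mul_left _ _ (pow_ne_zero 2 ha)]
  congr 2
  split_ifs with hr
  · rw [h r ((Nat.sub_le j 1).trans hr), sq, mul_assoc, mul_div_mul_left _ _ ha,
      div_mul_eq_mul_div, div_mul_eq_mul_div, mul_left_comm, mul_div_mul_left _ _ ha]
  · simp

/-- `e_k(x)` is radial in the coordinates of index at least `k`. -/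
lemma efun_apply_of_le {n k : ℕ} (hk : 1 ≤ k) (x : EuclideanSpace ℝ (Fin (n + 1)))
    {r : Fin (n + 1)} (hr : k ≤ (r : ℕ)) :
    efun n k x r = Real.sqrt (sfun n k x / sfun n (k - 1) x) *
      (coordfun n x (k - 1) / sfun n k x) * x r := by
  have hne : (r : ℕ) ≠ k - 1 := by omega
  simp [efun, hne, hr, mul_assoc]

lemma sfun_pos {n j : ℕ} (hj : j ≤ n) {x : EuclideanSpace ℝ (Fin (n + 1))} (hx : x ∈ Usph n) :
    0 < sfun n j x := by
  have hlast : 0 < x (Fin.last n) := by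
    simpa [Usph, coordfun, Fin.last] using hx
  refine Finset.sum_pos' (fun r _ => ?_) ⟨Fin.last n, Finset.mem_univ _, ?_⟩
  · split_ifs <;> positivity
  · rw [if_pos (by simpa using hj)]
    positivity

lemma differentiable_sfun (n j : ℕ) : Differentiable ℝ (sfun n j) := by
  unfold sfun
  refine Differentiable.fun_sum fun r _ => ?_
  split_ifs <;> fun_prop

lemma differentiable_coordfun (n j : ℕ) : Differentiable ℝ fun x => coordfun n x j := by
  unfold coordfun
  split_ifs <;> fun_prop

lemma differentiableAt_efun {n j : ℕ} (hj : j ≤ n) {x : EuclideanSpace ℝ (Fin (n + 1))}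
    (hx : x ∈ Usph n) : DifferentiableAt ℝ (efun n j) x := by
  have hs : DifferentiableAt ℝ (sfun n j) x := differentiable_sfun n j x
  have hs' : DifferentiableAt ℝ (sfun n (j - 1)) x := differentiable_sfun n (j - 1) x
  have hc : DifferentiableAt ℝ (fun y => coordfun n y (j - 1)) x :=
    differentiable_coordfun n (j - 1) x
  have hpos := sfun_pos hj hx
  have hpos' := sfun_pos ((Nat.sub_le j 1).trans hj) hx
  rw [differentiableAt_euclidean]
  intro r
  have hcut : DifferentiableAt ℝ
      (fun y : EuclideanSpace ℝ (Fin (n + 1)) => if j ≤ (r : ℕ) then y r else 0) x := by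
    split_ifs <;> fun_prop
  simp only [efun, div_eq_mul_inv]
  exact ((hs.mul (hs'.inv hpos'.ne')).sqrt (mul_pos hpos (inv_pos.2 hpos')).ne').mul
    (((hc.mul (hs.inv hpos.ne')).mul hcut).const_add _)

/-- For `1 ≤ k < j ≤ n` and `x ∈ U ∩ S^n`, the Fréchet derivative of `e_j` at `x` in the
direction `e_k(x)` vanishes: `D_{e_k(x)} e_j(x) = 0`. -/
theorem statement3 (n k j : ℕ) (hk : 1 ≤ k) (hkj : k < j) (hj : j ≤ n)
    (x : EuclideanSpace ℝ (Fin (n + 1))) (hxU : x ∈ Usph n) (hxS : x ∈ sph n) :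
    fderiv ℝ (efun n j) x (efun n k x) = 0 := by
  rw [← (differentiableAt_efun hj hxU).lineDeriv_eq_fderiv]
  set c := Real.sqrt (sfun n k x / sfun n (k - 1) x) *
    (coordfun n x (k - 1) / sfun n k x) with hc
  have hcont : ContinuousAt (fun t : ℝ => 1 + t * c) 0 := by fun_prop
  have hne : ∀ᶠ t : ℝ in nhds 0, 1 + t * c ≠ 0 := hcont.eventually_ne (by simp)
  have heq : (fun t : ℝ => efun n j (x + t • efun n k x)) =ᶠ[nhds 0] fun _ => efun n j x := by
    filter_upwards [hne] with t ht
    refine efun_eq_of_scale ht fun r hr => ?_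
    rw [PiLp.add_apply, PiLp.smul_apply, efun_apply_of_le hk x (by omega), ← hc, smul_eq_mul]
    ring
  rw [lineDeriv, heq.deriv_eq, deriv_const]
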